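/- arXiv:1901.08165 — 6 statements merged into one kernel-verified Lean document; each statement's English description precedes it below -/
import Mathlib

section
/- The relation ≼ on X defined by p ≼ q iff there exists α ∈ Ω with p = α • q is a partial order: it is reflexive, transitive, and antisymmetric. -/
/-- A set `X` equipped with an action of a Heyting algebra `Ω` (regarded as a
monoid under the meet operation `⊓` with unit `⊤`) together with an
`Ω`-valued equality (truth-value assignment) `e p q = ⟨p = q⟩`. -/
structure HeytingValuedSet (Ω : Type*) [HeytingAlgebra Ω] (X : Type*) where
  /-- the monoid action `•` of `(Ω, ⊓, ⊤)` on `X` -/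
  act : Ω → X → X
  /-- the truth value `⟨p = q⟩` of the assertion `p = q` -/
  e : X → X → Ω
  act_inf : ∀ (α β : Ω) (p : X), act (α ⊓ β) p = act α (act β p)
  act_top : ∀ p : X, act ⊤ p = p
  welldef : ∀ p q : X, act (e p q) p = act (e p q) q
  unit_bound : ∀ (α : Ω) (p : X), α ≤ e (act α p) p
  e_symm : ∀ p q : X, e p q ≤ e q p
  e_trans : ∀ p q r : X, e p q ⊓ e q r ≤ e p r

/-- The relation `p ≼ q` on `X`: there exists `α ∈ Ω` with `p = α • q`. -/
def HeytingValuedSet.ple {Ω : Type*} [HeytingAlgebra Ω] {X : Type*}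
    (h : HeytingValuedSet Ω X) (p q : X) : Prop :=
  ∃ α : Ω, p = h.act α q

/-- The relation `≼` on `X` defined by `p ≼ q` iff `∃ α, p = α • q` is a
partial order: reflexive, transitive and antisymmetric. -/
theorem stmt_4 {Ω X : Type*} [HeytingAlgebra Ω] (h : HeytingValuedSet Ω X) :
    (∀ p : X, h.ple p p) ∧
    (∀ p q r : X, h.ple p q → h.ple q r → h.ple p r) ∧
    (∀ p q : X, h.ple p q → h.ple q p → p = q) := by
  refine ⟨fun p => ⟨⊤, (h.act_top p).symm⟩, ?_, ?_⟩
  · rintro p q r ⟨α, ha⟩ ⟨β, hb⟩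
    exact ⟨α ⊓ β, by rw [h.act_inf, ← hb, ha]⟩
  · rintro p q ⟨α, ha⟩ ⟨β, hb⟩
    have h1 : h.act α p = p := by
      conv_lhs => rw [ha, ← h.act_inf, inf_idem]
      exact ha.symm
    have h2 : h.act β p = h.act α (h.act β p) := by
      rw [← h.act_inf, inf_comm, h.act_inf, h1]
    rw [← hb, ← ha] at h2
    exact h2.symm
end

section
/- For all p, q ∈ X, the element p ∧ q := ⟨p=q⟩ • p (which also equals ⟨p=q⟩ • q) is a greatest lower bound of p and q for the partial order ≼ on X: p ∧ q ≼ p, p ∧ q ≼ q, and whenever r ≼ p and r ≼ q then r ≼ p ∧ q. -/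
/-- For all `p, q ∈ X`, the element `p ∧ q := ⟨p=q⟩ • p` (which also equals
`⟨p=q⟩ • q`) is a greatest lower bound of `p` and `q` for the partial order
`≼` on `X`. -/
theorem stmt_6 {Ω X : Type*} [HeytingAlgebra Ω] (h : HeytingValuedSet Ω X)
    (p q : X) :
    h.act (h.e p q) p = h.act (h.e p q) q ∧
    h.ple (h.act (h.e p q) p) p ∧
    h.ple (h.act (h.e p q) p) q ∧
    (∀ r : X, h.ple r p → h.ple r q → h.ple r (h.act (h.e p q) p)) := by
  refine ⟨h.welldef p q, ⟨_, rfl⟩, ⟨_, h.welldef p q⟩, ?_⟩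
  rintro r ⟨α, hα⟩ ⟨β, hβ⟩
  have hβr : h.act β r = r := by
    rw [hβ, ← h.act_inf, inf_idem]
  have hr : h.act (β ⊓ α) p = r := by
    rw [h.act_inf, ← hα, hβr]
  have h1 : α ≤ h.e r p := by
    rw [hα]; exact h.unit_bound α p
  have h2 : β ≤ h.e r q := by
    rw [hβ]; exact h.unit_bound β q
  have h3 : β ⊓ α ≤ h.e p q :=
    le_trans (le_inf (inf_le_right.trans (h1.trans (h.e_symm r p)))
      (inf_le_left.trans h2)) (h.e_trans p r q)
  exact ⟨β ⊓ α, by rw [← h.act_inf, inf_eq_left.mpr h3, hr]⟩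
end

section
/- For every p ∈ X, the monotone maps F_p : Ω → X, F_p(α) = α • p, and G_p : X → Ω, G_p(q) = ⟨p = ⟨p=q⟩ • p⟩ (the truth value of p ≼ q, i.e. e(p, p ∧ q) where p ∧ q = ⟨p=q⟩ • p), form an adjunction (Galois connection) between the posets (Ω, ≤) and (X, ≼): for all α ∈ Ω and q ∈ X, α • p ≼ q if and only if α ≤ G_p(q). -/
/-- For every `p ∈ X`, the maps `F_p : Ω → X`, `F_p(α) = α • p`, and
`G_p : X → Ω`, `G_p(q) = ⟨p = ⟨p=q⟩ • p⟩` (the truth value of `p ≼ q`,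
i.e. `e(p, p ∧ q)`), form a Galois connection between `(Ω, ≤)` and `(X, ≼)`:
for all `α ∈ Ω` and `q ∈ X`, `α • p ≼ q` iff `α ≤ G_p(q)`. -/
theorem stmt_7 {Ω X : Type*} [HeytingAlgebra Ω] (h : HeytingValuedSet Ω X)
    (p : X) :
    ∀ (α : Ω) (q : X),
      h.ple (h.act α p) q ↔ α ≤ h.e p (h.act (h.e p q) p) := by
  intro α q
  have comm : ∀ (a b : Ω) (x : X), h.act a (h.act b x) = h.act b (h.act a x) := by
    intro a b x
    rw [← h.act_inf, ← h.act_inf, inf_comm]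
  have idem : ∀ (a : Ω) (x : X), h.act a (h.act a x) = h.act a x := by
    intro a x
    rw [← h.act_inf, inf_idem]
  constructor
  · rintro ⟨β, hβ⟩
    have h1 : h.act (α ⊓ β) p = h.act α p := by
      rw [h.act_inf, comm, hβ, idem]
    have h2 : h.act (α ⊓ β) q = h.act α p := by
      rw [h.act_inf, ← hβ, idem]
    have h3 : α ⊓ β ≤ h.e p q := by
      have a1 := (h.unit_bound (α ⊓ β) p).trans (h.e_symm _ _)
      have a2 := h.unit_bound (α ⊓ β) q
      rw [h1] at a1
      rw [h2] at a2
      exact (le_inf a1 a2).trans (h.e_trans _ _ _)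
    have h4 : h.act α (h.act (h.e p q) p) = h.act α p := by
      rw [comm]
      conv_lhs => rw [← h1]
      rw [← h.act_inf, inf_eq_right.mpr h3, h1]
    have b1 := (h.unit_bound α p).trans (h.e_symm _ _)
    have b2 := h.unit_bound α (h.act (h.e p q) p)
    rw [h4] at b2
    exact (le_inf b1 b2).trans (h.e_trans _ _ _)
  · intro hα
    refine ⟨α ⊓ (h.e p (h.act (h.e p q) p) ⊓ h.e p q), ?_⟩
    rw [h.act_inf, h.act_inf, ← h.welldef p q, ← h.welldef p (h.act (h.e p q) p),
      ← h.act_inf, inf_eq_left.mpr hα]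
end

section
/- Let (F, θ) be a monad morphism from T₁ to T₂, and let F̂ : Alg(T₁) → Alg(T₂) be the induced functor, defined by F̂(A, σ) = (FA, Fσ ∘ θ_A) and F̂(h) = Fh. If F is fully faithful and every component θ_A is an epimorphism, then F̂ is fully faithful. -/
open CategoryTheory

theorem aux_transport {C : Type*} [Category C] (T : Monad C) (P Q : Monad.Algebra T)
    (B B' : C) (p : T.obj B ⟶ B) (q : T.obj B' ⟶ B')
    (hP : P.A = B) (hp : HEq P.a p) (hQ : Q.A = B') (hq : HEq Q.a q) (g : P ⟶ Q) :
    ∃ g' : B ⟶ B', HEq g.f g' ∧ T.map g' ≫ q = p ≫ g' := by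
  subst hP
  subst hQ
  have hp' := eq_of_heq hp
  have hq' := eq_of_heq hq
  subst hp'
  subst hq'
  exact ⟨g.f, HEq.rfl, g.h⟩

/-- Let `(F, θ)` be a monad morphism from `T₁` to `T₂`, and let
`F̂ : Alg(T₁) ⥤ Alg(T₂)` be the induced functor (on objects
`F̂(A, σ) = (FA, Fσ ∘ θ_A)`, on morphisms `F̂(h) = Fh`).  If `F` is fully
faithful and every component `θ_A` is an epimorphism, then `F̂` is fully
faithful. -/
theorem stmt_15 {C₁ C₂ : Type*} [Category C₁] [Category C₂]
    (T₁ : Monad C₁) (T₂ : Monad C₂) (F : C₁ ⥤ C₂)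
    (θ : F ⋙ T₂.toFunctor ⟶ T₁.toFunctor ⋙ F)
    (θ_μ : ∀ A : C₁, T₂.μ.app (F.obj A) ≫ θ.app A =
      T₂.map (θ.app A) ≫ θ.app (T₁.obj A) ≫ F.map (T₁.μ.app A))
    (θ_η : ∀ A : C₁, T₂.η.app (F.obj A) ≫ θ.app A = F.map (T₁.η.app A))
    (Fhat : Monad.Algebra T₁ ⥤ Monad.Algebra T₂)
    (hobj : ∀ X : Monad.Algebra T₁,
      (Fhat.obj X).A = F.obj X.A ∧ HEq (Fhat.obj X).a (θ.app X.A ≫ F.map X.a))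
    (hmap : ∀ (X Y : Monad.Algebra T₁) (f : X ⟶ Y),
      HEq (Fhat.map f).f (F.map f.f))
    (hFull : F.Full) (hFaithful : F.Faithful)
    (hepi : ∀ A : C₁, Epi (θ.app A)) :
    Fhat.Full ∧ Fhat.Faithful := by
  refine ⟨⟨?_⟩, ⟨?_⟩⟩
  · intro X Y g
    obtain ⟨g', hg, hcomm⟩ := aux_transport T₂ (Fhat.obj X) (Fhat.obj Y) (F.obj X.A) (F.obj Y.A)
      (θ.app X.A ≫ F.map X.a) (θ.app Y.A ≫ F.map Y.a)
      (hobj X).1 (hobj X).2 (hobj Y).1 (hobj Y).2 g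
    obtain ⟨h, rfl⟩ := F.map_surjective g'
    have hh : T₁.map h ≫ Y.a = X.a ≫ h := by
      apply F.map_injective
      have := hepi X.A
      rw [← cancel_epi (θ.app X.A)]
      have nat := θ.naturality h
      simp only [Functor.comp_map] at nat
      rw [F.map_comp, F.map_comp, ← Category.assoc, ← Category.assoc]
      refine Eq.trans ?_ hcomm
      rw [← Category.assoc]
      exact congrArg (· ≫ F.map Y.a) nat.symm
    refine ⟨⟨h, hh⟩, ?_⟩
    apply Monad.Algebra.Hom.ext
    exact eq_of_heq ((hmap X Y ⟨h, hh⟩).trans hg.symm)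
  · intro X Y f g hfg
    apply Monad.Algebra.Hom.ext
    apply F.map_injective
    apply eq_of_heq
    refine (hmap X Y f).symm.trans ?_
    rw [hfg]
    exact hmap X Y g
end

section
/- Let (F, θ) be a monad morphism from T₁ to T₂ with F fully faithful and θ a natural isomorphism, and let F̂ : Alg(T₁) → Alg(T₂) be the induced functor (F̂(A, σ) = (FA, Fσ ∘ θ_A), F̂(h) = Fh), which satisfies U₂ ∘ F̂ = F ∘ U₁. Then this commuting square is a pullback of categories: for every category D and functors G₁ : D → C₁, G₂ : D → Alg(T₂) with F ∘ G₁ = U₂ ∘ G₂, there exists a unique functor G : D → Alg(T₁) such that U₁ ∘ G = G₁ and F̂ ∘ G = G₂. -/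
open CategoryTheory

theorem aux_alg_ext {C : Type*} [Category C] {T : Monad C} {X Y : Monad.Algebra T}
    (h : X.A = Y.A) (h' : HEq X.a Y.a) : X = Y := by
  cases X; cases Y
  dsimp only at h
  subst h
  cases h'
  rfl

theorem aux_hom_ext {C : Type*} [Category C] {T : Monad C} {X Y X' Y' : Monad.Algebra T}
    (f : X ⟶ Y) (g : X' ⟶ Y') (hX : X = X') (hY : Y = Y') (h : HEq f.f g.f) : HEq f g := by
  subst hX hY
  exact heq_of_eq (Monad.Algebra.Hom.ext (eq_of_heq h))

theorem aux_f_heq {C : Type*} [Category C] {T : Monad C} {X Y X' Y' : Monad.Algebra T}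
    (f : X ⟶ Y) (g : X' ⟶ Y') (hX : X = X') (hY : Y = Y') (h : HEq f g) : HEq f.f g.f := by
  subst hX hY
  cases h
  rfl

section
variable {C₁ C₂ : Type*} [Category C₁] [Category C₂]
    (T₁ : Monad C₁) (T₂ : Monad C₂) (F : C₁ ⥤ C₂)
    (θ : F ⋙ T₂.toFunctor ⟶ T₁.toFunctor ⋙ F)

theorem aux_lift (θ_μ : ∀ A : C₁, T₂.μ.app (F.obj A) ≫ θ.app A =
      T₂.map (θ.app A) ≫ θ.app (T₁.obj A) ≫ F.map (T₁.μ.app A))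
    (θ_η : ∀ A : C₁, T₂.η.app (F.obj A) ≫ θ.app A = F.map (T₁.η.app A))
    [F.Full] [F.Faithful] [IsIso θ] (X : C₁) (B : Monad.Algebra T₂) (h : F.obj X = B.A) :
    ∃ S : {a : T₁.obj X ⟶ X // T₁.η.app X ≫ a = 𝟙 X ∧
      T₁.μ.app X ≫ a = T₁.map a ≫ a}, HEq (θ.app X ≫ F.map S.1) B.a := by
  obtain ⟨A, b, hu, ha⟩ := B
  dsimp only at h
  subst h
  obtain ⟨a, hFa⟩ := F.map_surjective (inv (θ.app X) ≫ b)
  have hb : θ.app X ≫ F.map a = b := by rw [hFa]; simp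
  subst hb
  refine ⟨⟨a, ?_, ?_⟩, HEq.rfl⟩
  · apply F.map_injective
    rw [← Category.assoc, θ_η] at hu
    simpa using hu
  · apply F.map_injective
    have n := θ.naturality a
    dsimp only [Functor.comp_map, Functor.comp_obj] at n
    rw [← Category.assoc, θ_μ, T₂.map_comp, Category.assoc, Category.assoc, Category.assoc,
      reassoc_of% n] at ha
    have e : IsIso (T₂.map (θ.app X)) := inferInstance
    rw [cancel_epi] at ha
    have e' : IsIso (θ.app (T₁.obj X)) := inferInstance
    rw [F.map_comp, F.map_comp]
    exact (cancel_epi (θ.app (T₁.obj X))).1 ha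

theorem aux_hom [F.Faithful] [IsIso θ] {X Y : C₁} (g : X ⟶ Y)
    (a : T₁.obj X ⟶ X) (a' : T₁.obj Y ⟶ Y) {B B' : Monad.Algebra T₂} (k : B ⟶ B')
    (hX : F.obj X = B.A) (hY : F.obj Y = B'.A) (hk : HEq (F.map g) k.f)
    (ha : HEq (θ.app X ≫ F.map a) B.a) (ha' : HEq (θ.app Y ≫ F.map a') B'.a) :
    T₁.map g ≫ a' = a ≫ g := by
  obtain ⟨A, b, hu, hm⟩ := B
  obtain ⟨A', b', hu', hm'⟩ := B'
  obtain ⟨k, hk'⟩ := k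
  dsimp only at *
  subst hX hY
  cases hk
  cases ha
  cases ha'
  have n := θ.naturality g
  dsimp only [Functor.comp_map, Functor.comp_obj] at n
  rw [reassoc_of% n, Category.assoc] at hk'
  apply F.map_injective
  rw [F.map_comp, F.map_comp]
  exact (cancel_epi (θ.app X)).1 hk'

theorem aux_inj [F.Faithful] [IsIso θ] {S S' : Monad.Algebra T₁} (h : S.A = S'.A)
    (h' : HEq (θ.app S.A ≫ F.map S.a) (θ.app S'.A ≫ F.map S'.a)) : S = S' := by
  apply aux_alg_ext h
  obtain ⟨A, b, hu, hm⟩ := S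
  obtain ⟨A', b', hu', hm'⟩ := S'
  dsimp only at *
  subst h
  exact heq_of_eq (F.map_injective ((cancel_epi (θ.app A)).1 (eq_of_heq h')))
end


/-- Let `(F, θ)` be a monad morphism from `T₁` to `T₂` with `F` fully faithful
and `θ` a natural isomorphism, and let `F̂ : Alg(T₁) ⥤ Alg(T₂)` be the induced
functor (`F̂(A, σ) = (FA, Fσ ∘ θ_A)`, `F̂(h) = Fh`), which satisfies
`U₂ ∘ F̂ = F ∘ U₁`.  Then this commuting square is a pullback of categories:
for every category `D` and functors `G₁ : D ⥤ C₁`, `G₂ : D ⥤ Alg(T₂)` with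
`F ∘ G₁ = U₂ ∘ G₂`, there exists a unique functor `G : D ⥤ Alg(T₁)` such that
`U₁ ∘ G = G₁` and `F̂ ∘ G = G₂`. -/
theorem stmt_16 {C₁ C₂ : Type*} [Category C₁] [Category C₂]
    (T₁ : Monad C₁) (T₂ : Monad C₂) (F : C₁ ⥤ C₂)
    (θ : F ⋙ T₂.toFunctor ⟶ T₁.toFunctor ⋙ F)
    (θ_μ : ∀ A : C₁, T₂.μ.app (F.obj A) ≫ θ.app A =
      T₂.map (θ.app A) ≫ θ.app (T₁.obj A) ≫ F.map (T₁.μ.app A))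
    (θ_η : ∀ A : C₁, T₂.η.app (F.obj A) ≫ θ.app A = F.map (T₁.η.app A))
    (hFull : F.Full) (hFaithful : F.Faithful) (hiso : IsIso θ)
    (Fhat : Monad.Algebra T₁ ⥤ Monad.Algebra T₂)
    (hobj : ∀ X : Monad.Algebra T₁,
      (Fhat.obj X).A = F.obj X.A ∧ HEq (Fhat.obj X).a (θ.app X.A ≫ F.map X.a))
    (hmap : ∀ (X Y : Monad.Algebra T₁) (f : X ⟶ Y),
      HEq (Fhat.map f).f (F.map f.f))
    (hsq : Fhat ⋙ Monad.forget T₂ = Monad.forget T₁ ⋙ F) :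
    ∀ (D : Type*) [Category D] (G₁ : D ⥤ C₁) (G₂ : D ⥤ Monad.Algebra T₂),
      G₁ ⋙ F = G₂ ⋙ Monad.forget T₂ →
      ∃! G : D ⥤ Monad.Algebra T₁,
        G ⋙ Monad.forget T₁ = G₁ ∧ G ⋙ Fhat = G₂ := by
  intro D _ G₁ G₂ hG
  have hO : ∀ d, F.obj (G₁.obj d) = (G₂.obj d).A := fun d => Functor.congr_obj hG d
  have hM : ∀ {d e : D} (f : d ⟶ e), HEq (F.map (G₁.map f)) (G₂.map f).f :=
    fun f => Functor.hcongr_hom hG f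
  choose S hS using fun d => aux_lift T₁ T₂ F θ θ_μ θ_η (G₁.obj d) (G₂.obj d) (hO d)
  let G : D ⥤ Monad.Algebra T₁ :=
    { obj := fun d => ⟨G₁.obj d, (S d).1, (S d).2.1, (S d).2.2⟩
      map := fun {d e} f => ⟨G₁.map f, aux_hom T₁ T₂ F θ (G₁.map f) _ _ (G₂.map f)
        (hO d) (hO e) (hM f) (hS d) (hS e)⟩
      map_id := fun d => Monad.Algebra.Hom.ext (G₁.map_id d)
      map_comp := fun f g => Monad.Algebra.Hom.ext (G₁.map_comp f g) }
  have hGo : ∀ d, Fhat.obj (G.obj d) = G₂.obj d := fun d =>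
    aux_alg_ext ((hobj (G.obj d)).1.trans (hO d)) ((hobj (G.obj d)).2.trans (hS d))
  refine ⟨G, ⟨rfl, ?_⟩, ?_⟩
  · refine Functor.hext hGo fun d e f => ?_
    exact aux_hom_ext _ _ (hGo d) (hGo e) ((hmap _ _ (G.map f)).trans (hM f))
  · rintro G' ⟨h1, h2⟩
    have ho : ∀ d, G'.obj d = G.obj d := fun d => by
      refine aux_inj T₁ T₂ F θ (Functor.congr_obj h1 d) ?_
      have e : Fhat.obj (G'.obj d) = Fhat.obj (G.obj d) :=
        (Functor.congr_obj h2 d).trans (hGo d).symm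
      refine (hobj (G'.obj d)).2.symm.trans (HEq.trans ?_ (hobj (G.obj d)).2)
      rw [e]
    refine Functor.hext ho fun d e f => ?_
    exact aux_hom_ext _ _ (ho d) (ho e) (Functor.hcongr_hom h1 f)
end

section
/- Let (F, θ) be a monad morphism from T₁ to T₂ with θ a natural isomorphism with inverse β (so θ_A ∘ β_A = id and β_A ∘ θ_A = id for every A), and suppose F is fully faithful. Let F̂ be the induced functor with U₂ ∘ F̂ = F ∘ U₁, and let G₁ : D → C₁, G₂ : D → Alg(T₂) be functors with F ∘ G₁ = U₂ ∘ G₂. Then for every object D of D, writing σ̃_D : T₂(FG₁D) → FG₁D for the structure map of G₂D (whose carrier is FG₁D), the pair (G₁D, F⁻¹(σ̃_D ∘ β_{G₁D})) is a T₁-algebra, where F⁻¹ denotes the inverse of F's bijection on hom-sets. -/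
open CategoryTheory

theorem aux_transport_s17 {C₂ : Type*} [Category C₂] (T₂ : Monad C₂) (B : Monad.Algebra T₂) (X : C₂)
    (e : X = B.A) :
    T₂.η.app X ≫ (T₂.map (eqToHom e) ≫ B.a ≫ eqToHom e.symm) = 𝟙 X ∧
    T₂.μ.app X ≫ (T₂.map (eqToHom e) ≫ B.a ≫ eqToHom e.symm) =
      T₂.map (T₂.map (eqToHom e) ≫ B.a ≫ eqToHom e.symm) ≫
        (T₂.map (eqToHom e) ≫ B.a ≫ eqToHom e.symm) := by
  subst e
  refine ⟨?_, ?_⟩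
  · simpa using B.unit
  · simpa using B.assoc

theorem aux_alg {C₁ C₂ : Type*} [Category C₁] [Category C₂]
    (T₁ : Monad C₁) (T₂ : Monad C₂) (F : C₁ ⥤ C₂) [F.Faithful]
    (θ : F ⋙ T₂.toFunctor ⟶ T₁.toFunctor ⋙ F)
    (β : T₁.toFunctor ⋙ F ⟶ F ⋙ T₂.toFunctor)
    (hβθ : ∀ A : C₁, β.app A ≫ θ.app A = 𝟙 (F.obj (T₁.obj A)))
    (hθβ : ∀ A : C₁, θ.app A ≫ β.app A = 𝟙 (T₂.obj (F.obj A)))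
    (θ_μ : ∀ A : C₁, T₂.μ.app (F.obj A) ≫ θ.app A =
      T₂.map (θ.app A) ≫ θ.app (T₁.obj A) ≫ F.map (T₁.μ.app A))
    (θ_η : ∀ A : C₁, T₂.η.app (F.obj A) ≫ θ.app A = F.map (T₁.η.app A))
    (A : C₁) (s : T₂.obj (F.obj A) ⟶ F.obj A)
    (h1 : T₂.η.app (F.obj A) ≫ s = 𝟙 (F.obj A))
    (h2 : T₂.μ.app (F.obj A) ≫ s = T₂.map s ≫ s)
    (σ : T₁.obj A ⟶ A) (hσ : F.map σ = β.app A ≫ s) :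
    T₁.η.app A ≫ σ = 𝟙 A ∧ T₁.μ.app A ≫ σ = T₁.map σ ≫ σ := by
  have c1 : ∀ (A : C₁) {Z : C₂} (k : T₂.obj (F.obj A) ⟶ Z),
      θ.app A ≫ β.app A ≫ k = k := fun A Z k => by
    have := congrArg (· ≫ k) (hθβ A)
    exact (Category.assoc _ _ _).symm.trans (this.trans (Category.id_comp k))
  have c2 : ∀ (A : C₁) {Z : C₂} (k : F.obj (T₁.obj A) ⟶ Z),
      β.app A ≫ θ.app A ≫ k = k := fun A Z k => by
    have := congrArg (· ≫ k) (hβθ A)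
    exact (Category.assoc _ _ _).symm.trans (this.trans (Category.id_comp k))
  have hβ2 : T₂.map (β.app A) ≫ T₂.map (θ.app A) = 𝟙 (T₂.obj (F.obj (T₁.obj A))) :=
    (T₂.map_comp _ _).symm.trans ((congrArg T₂.map (hβθ A)).trans (T₂.map_id _))
  have hμ : F.map (T₁.μ.app A) =
      β.app (T₁.obj A) ≫ T₂.map (β.app A) ≫ T₂.μ.app (F.obj A) ≫ θ.app A := by
    rw [θ_μ]
    have := congrArg (· ≫ θ.app (T₁.obj A) ≫ F.map (T₁.μ.app A)) hβ2
    have h3 := (Category.assoc _ _ _).symm.trans (this.trans (Category.id_comp _))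
    exact ((congrArg (β.app (T₁.obj A) ≫ ·) h3).trans (c2 _ _)).symm
  have nat : F.map (T₁.map σ) ≫ β.app A = β.app (T₁.obj A) ≫ T₂.map (F.map σ) :=
    β.naturality σ
  constructor
  · apply F.map_injective
    rw [F.map_comp, hσ, ← θ_η]
    exact ((Category.assoc _ _ _).trans (congrArg (T₂.η.app (F.obj A) ≫ ·) (c1 A s))).trans
      (h1.trans (F.map_id A).symm)
  · apply F.map_injective
    have l : F.map (T₁.μ.app A) ≫ β.app A ≫ s =
        β.app (T₁.obj A) ≫ T₂.map (β.app A) ≫ T₂.map s ≫ s := by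
      rw [hμ, ← h2]
      simp only [Category.assoc]
      exact congrArg (fun z => β.app (T₁.obj A) ≫ T₂.map (β.app A) ≫ T₂.μ.app (F.obj A) ≫ z)
        (c1 A s)
    have r : F.map (T₁.map σ) ≫ β.app A ≫ s =
        β.app (T₁.obj A) ≫ T₂.map (β.app A) ≫ T₂.map s ≫ s := by
      refine (Category.assoc _ _ _).symm.trans ((congrArg (· ≫ s) nat).trans ?_)
      simp only [hσ]
      have := T₂.map_comp (β.app A) s
      refine (congrArg (fun z => (β.app (T₁.obj A) ≫ z) ≫ s) this).trans ?_
      exact (Category.assoc _ _ _).trans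
        (congrArg (β.app (T₁.obj A) ≫ ·) (Category.assoc _ _ _))
    rw [F.map_comp, F.map_comp, hσ]
    exact l.trans r.symm

/-- Let `(F, θ)` be a monad morphism from `T₁` to `T₂` with `θ` a natural
isomorphism with inverse `β` (so `θ_A ∘ β_A = id` and `β_A ∘ θ_A = id` for
every `A`), and suppose `F` is fully faithful.  Let `G₁ : D ⥤ C₁`,
`G₂ : D ⥤ Alg(T₂)` be functors with `F ∘ G₁ = U₂ ∘ G₂`.  Then for every
object `D₀` of `D`, writing `σ̃ : T₂(FG₁D₀) ⟶ FG₁D₀` for the structure map of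
`G₂D₀` (whose carrier is `FG₁D₀`, identified via `eqToHom`), the pair
`(G₁D₀, F⁻¹(σ̃ ∘ β_{G₁D₀}))` is a `T₁`-algebra, where `F⁻¹` is the inverse of
`F`'s bijection on hom-sets. -/
theorem stmt_17 {C₁ C₂ : Type*} [Category C₁] [Category C₂]
    (T₁ : Monad C₁) (T₂ : Monad C₂) (F : C₁ ⥤ C₂)
    [F.Full] [F.Faithful]
    (θ : F ⋙ T₂.toFunctor ⟶ T₁.toFunctor ⋙ F)
    (β : T₁.toFunctor ⋙ F ⟶ F ⋙ T₂.toFunctor)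
    (hβθ : ∀ A : C₁, β.app A ≫ θ.app A = 𝟙 (F.obj (T₁.obj A)))
    (hθβ : ∀ A : C₁, θ.app A ≫ β.app A = 𝟙 (T₂.obj (F.obj A)))
    (θ_μ : ∀ A : C₁, T₂.μ.app (F.obj A) ≫ θ.app A =
      T₂.map (θ.app A) ≫ θ.app (T₁.obj A) ≫ F.map (T₁.μ.app A))
    (θ_η : ∀ A : C₁, T₂.η.app (F.obj A) ≫ θ.app A = F.map (T₁.η.app A))
    {D : Type*} [Category D] (G₁ : D ⥤ C₁) (G₂ : D ⥤ Monad.Algebra T₂)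
    (hsq : G₁ ⋙ F = G₂ ⋙ Monad.forget T₂) (D₀ : D) :
    let σ : T₁.obj (G₁.obj D₀) ⟶ G₁.obj D₀ :=
      F.preimage (β.app (G₁.obj D₀) ≫
        T₂.map (eqToHom (Functor.congr_obj hsq D₀)) ≫
        (G₂.obj D₀).a ≫ eqToHom (Functor.congr_obj hsq D₀).symm)
    T₁.η.app (G₁.obj D₀) ≫ σ = 𝟙 (G₁.obj D₀) ∧
    T₁.μ.app (G₁.obj D₀) ≫ σ = T₁.map σ ≫ σ := by
  intro σ
  obtain ⟨h1, h2⟩ := aux_transport_s17 T₂ (G₂.obj D₀) (F.obj (G₁.obj D₀))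
    (Functor.congr_obj hsq D₀)
  exact aux_alg T₁ T₂ F θ β hβθ hθβ θ_μ θ_η (G₁.obj D₀) _ h1 h2 σ (F.map_preimage _)
end
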